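/- Let S be a skew lattice with D-classes A > B and let a ∈ A. Then the image set of a in B equals the set of elements of B lying below a in the natural partial order: {a∧b∧a : b ∈ B} = {y ∈ B : a∧y = y = y∧a}. -/

import Mathlib

/-!
In a band, `x * y * x = x` holds exactly when `x` has the form `p * y * q`, so this relation is
Green's preorder, whose symmetric part is Green's relation `D`. If `b` precedes `a` in this
preorder, then `a * b * a` is `D`-related to `b`. Thus `b ↦ a * b * a` is an idempotent self-map of
every `D`-class lying below that of `a`, and its image is its set of fixed points, which are the
elements of that class below `a` in the natural partial order.
-/

/-- A band: a semigroup in which every element is idempotent. A skew lattice is used through the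
band formed by its meet. -/
class Band (S : Type*) extends Semigroup S where
  isIdempotentElem (x : S) : IsIdempotentElem x

namespace Band

/-- The natural partial order `y ≤ a` of a band. -/
def NaturalLE {S : Type*} [Mul S] (y a : S) : Prop :=
  a * y = y ∧ y * a = y

/-- Green's preorder of a band, comparing the two-sided ideals generated by `x` and `y`, in
equational form. -/
def GreenLE {S : Type*} [Mul S] (x y : S) : Prop :=
  x * y * x = x

/-- Green's relation `D` of a band, encoded as the symmetric part of Green's preorder. -/
def GreenD {S : Type*} [Mul S] (x y : S) : Prop :=
  AntisymmRel GreenLE x y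

variable {S : Type*} [Band S] {a b x y z : S}

theorem naturalLE_mul_mul (a b : S) : NaturalLE (a * b * a) a :=
  ⟨by rw [mul_assoc, (isIdempotentElem a).mul_self_mul], (isIdempotentElem a).mul_mul_self (a * b)⟩

theorem greenLE_iff_exists_eq_mul_mul : GreenLE x y ↔ ∃ p q, x = p * y * q := by
  refine ⟨fun h ↦ ⟨x, x, h.symm⟩, fun ⟨p, q, h⟩ ↦ ?_⟩
  have absorb : x * y * q = x := by
    rw [h, mul_assoc _ y q, mul_assoc p y q, (isIdempotentElem (y * q)).mul_mul_self]
  calc x * y * x = x * y * (x * y * q) := by rw [absorb]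
    _ = x * y * q := (isIdempotentElem (x * y)).mul_self_mul q
    _ = x := absorb

theorem GreenLE.trans (hxy : GreenLE x y) (hyz : GreenLE y z) : GreenLE x z := by
  obtain ⟨p, q, rfl⟩ := greenLE_iff_exists_eq_mul_mul.mp hxy
  obtain ⟨r, s, rfl⟩ := greenLE_iff_exists_eq_mul_mul.mp hyz
  exact greenLE_iff_exists_eq_mul_mul.mpr ⟨p * r, s * q, by simp only [mul_assoc]⟩

theorem GreenD.trans (hxy : GreenD x y) (hyz : GreenD y z) : GreenD x z :=
  ⟨hxy.1.trans hyz.1, hyz.2.trans hxy.2⟩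

theorem GreenLE.greenD_mul_mul (hba : GreenLE b a) : GreenD (a * b * a) b := by
  refine ⟨greenLE_iff_exists_eq_mul_mul.mpr ⟨a, a, rfl⟩, ?_⟩
  calc b * (a * b * a) * b = b * a * b * a * b := by simp only [mul_assoc]
    _ = b := by rw [hba, hba]

end Band

open Band in
theorem imageSet_eq_below_general {S : Type*} [Band S] {a b₀ : S} (h : GreenLE b₀ a) :
    {z | ∃ b, GreenD b b₀ ∧ z = a * b * a} = {y | GreenD y b₀ ∧ NaturalLE y a} := by
  ext y
  constructor
  · rintro ⟨b, hb, rfl⟩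
    have hba : GreenLE b a := hb.1.trans h
    exact ⟨hba.greenD_mul_mul.trans hb, naturalLE_mul_mul a b⟩
  · rintro ⟨hy, hay, hya⟩
    exact ⟨y, hy, by rw [hay, hya]⟩

/-- The image set of a in B is exactly the set of elements of B below a. -/
theorem imageSet_eq_below {S : Type*} (wedge vee : S → S → S)
    (wedge_idem : ∀ x : S, wedge x x = x)
    (vee_idem : ∀ x : S, vee x x = x)
    (wedge_assoc : ∀ x y z : S, wedge (wedge x y) z = wedge x (wedge y z))
    (vee_assoc : ∀ x y z : S, vee (vee x y) z = vee x (vee y z))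
    (abs₁ : ∀ x y : S, wedge x (vee x y) = x)
    (abs₂ : ∀ x y : S, wedge (vee y x) x = x)
    (abs₃ : ∀ x y : S, vee x (wedge x y) = x)
    (abs₄ : ∀ x y : S, vee (wedge y x) x = x)
    (a₀ b₀ : S) (hAB : wedge (wedge b₀ a₀) b₀ = b₀)
    (A : Set S) (hA : A = {x | wedge (wedge x a₀) x = x ∧ wedge (wedge a₀ x) a₀ = a₀})
    (B : Set S) (hB : B = {x | wedge (wedge x b₀) x = x ∧ wedge (wedge b₀ x) b₀ = b₀})
    (a : S) (ha : a ∈ A) :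
    {z | ∃ b ∈ B, z = wedge (wedge a b) a} = {y | y ∈ B ∧ wedge a y = y ∧ wedge y a = y} := by
  subst hA hB
  let _ : Band S :=
    { mul := wedge, mul_assoc := wedge_assoc, isIdempotentElem := wedge_idem }
  exact imageSet_eq_below_general (Band.GreenLE.trans hAB ha.2)
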